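/- arXiv:1211.3259 — 6 statements merged into one kernel-verified Lean document; each statement's English description precedes it below -/
import Mathlib

section
/- Let E and F be finite-dimensional normed vector spaces over ℂ, let Φ, Ψ : E → F and g : F → ℂ, and let x ∈ E. Assume: (i) ContDiffAt ℂ 2 Φ x, ContDiffAt ℂ 2 Ψ x, and ContDiffAt ℂ 2 g (Φ x); (ii) Φ(x) = Ψ(x); (iii) g ∘ Φ and g ∘ Ψ agree on a neighbourhood of x; (iv) writing f := g ∘ Φ, the point x is a critical point of f, i.e. fderiv ℂ f x = 0; (v) the continuous linear maps dΦ := fderiv ℂ Φ x and dΨ := fderiv ℂ Ψ x are bijective; (vi) dΦ v = dΨ v for every v ∈ E with (fderiv ℂ (fderiv ℂ f) x) v = 0, i.e. for every v in the kernel of the Hessian of f at x. Then the determinant of the linear automorphism dΨ⁻¹ ∘ dΦ of E equals 1 or -1. -/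
/-!
Since `x` is critical for `g ∘ Φ` and `dΦ` is onto, `dg` vanishes at `Φ x = Ψ x`. Hence the
Hessian `B` of `f = g ∘ Φ = g ∘ Ψ` at `x` is the pull-back of the Hessian of `g` both along `dΦ`
and along `dΨ` (`hessian_comp_of_fderiv_eq_zero`), so `T = dΨ⁻¹ ∘ dΦ` preserves `B`. By hypothesis
`T` is the identity on the radical of `B`, so `det T` is the determinant of the map induced by `T`
on the quotient by the radical (`det_mul_self_eq_one_of_fixes_ker`). There the induced form is
nondegenerate and preserved, so this determinant squares to `1`
(`det_mul_self_eq_one_of_preserves`).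
-/

/-- Second-order chain rule at a point whose image is critical for `g`: the term containing
the second derivative of `Φ` is multiplied by `dg = 0` and disappears. -/
lemma hessian_comp_of_fderiv_eq_zero
    {E F : Type*} [NormedAddCommGroup E] [NormedSpace ℂ E]
    [NormedAddCommGroup F] [NormedSpace ℂ F]
    {Φ : E → F} {g : F → ℂ} {x : E}
    (hΦ : ContDiffAt ℂ 2 Φ x) (hg : ContDiffAt ℂ 2 g (Φ x)) (h0 : fderiv ℂ g (Φ x) = 0)
    (u v : E) :
    fderiv ℂ (fderiv ℂ (g ∘ Φ)) x u v =
      fderiv ℂ (fderiv ℂ g) (Φ x) (fderiv ℂ Φ x u) (fderiv ℂ Φ x v) := by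
  have hΦd : DifferentiableAt ℂ Φ x := hΦ.differentiableAt (by norm_num)
  have hev : fderiv ℂ (g ∘ Φ) =ᶠ[nhds x] fun y => (fderiv ℂ g (Φ y)).comp (fderiv ℂ Φ y) := by
    filter_upwards [hΦ.eventually (by simp),
      hΦ.continuousAt.eventually (hg.eventually (by simp))] with y h1 h2
    exact fderiv_comp y (h2.differentiableAt (by norm_num)) (h1.differentiableAt (by norm_num))
  have hΦ' : DifferentiableAt ℂ (fderiv ℂ Φ) x :=
    (hΦ.fderiv_right (m := 1) (by norm_num)).differentiableAt (by norm_num)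
  have hg' : DifferentiableAt ℂ (fderiv ℂ g) (Φ x) :=
    (hg.fderiv_right (m := 1) (by norm_num)).differentiableAt (by norm_num)
  have hd := (hg'.hasFDerivAt.comp x hΦd.hasFDerivAt).clm_comp hΦ'.hasFDerivAt
  rw [hev.fderiv_eq]
  erw [hd.fderiv]
  simp [h0]

/-- An endomorphism preserving a nondegenerate bilinear form `B`, viewed as a map to the dual,
satisfies `Tᵗ ∘ B ∘ T = B`, and taking determinants gives `(det T)² = 1`. -/
lemma det_mul_self_eq_one_of_preserves
    {V : Type*} [AddCommGroup V] [Module ℂ V] [FiniteDimensional ℂ V]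
    (B : V →ₗ[ℂ] Module.Dual ℂ V) (hB : Function.Injective B) (T : V →ₗ[ℂ] V)
    (h : ∀ u v, B (T u) (T v) = B u v) : LinearMap.det T * LinearMap.det T = 1 := by
  let e : V ≃ₗ[ℂ] Module.Dual ℂ V :=
    LinearEquiv.ofInjectiveOfFinrankEq B hB Subspace.dual_finrank_eq.symm
  have hcomp : T.dualMap ∘ₗ (e.toLinearMap ∘ₗ T ∘ₗ e.symm.toLinearMap) = LinearMap.id := by
    ext φ w
    obtain ⟨u, rfl⟩ := e.surjective φ
    simp only [LinearMap.comp_apply, LinearMap.dualMap_apply, LinearEquiv.coe_coe,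
      LinearMap.id_apply, e.symm_apply_apply]
    exact h u w
  have := congrArg LinearMap.det hcomp
  rwa [LinearMap.det_comp, LinearMap.det_conj, LinearMap.det_dualMap, LinearMap.det_id] at this

/-- The symmetric, possibly degenerate case: if `T` fixes the radical of `B` pointwise, only the map induced on the
quotient by the radical contributes to `det T`.
Symmetry makes `B` descend to that quotient in both variables. -/
lemma det_mul_self_eq_one_of_fixes_ker
    {V : Type*} [AddCommGroup V] [Module ℂ V] [FiniteDimensional ℂ V]
    (B : V →ₗ[ℂ] Module.Dual ℂ V) (hs : ∀ u v, B u v = B v u) (T : V →ₗ[ℂ] V)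
    (h : ∀ u v, B (T u) (T v) = B u v) (hk : ∀ v, B v = 0 → T v = v) :
    LinearMap.det T * LinearMap.det T = 1 := by
  let K := LinearMap.ker B
  have hK : K ≤ K.comap T := fun v hv => by
    rw [Submodule.mem_comap, hk v hv]; exact hv
  have hres : T.restrict hK = LinearMap.id := by
    ext v
    exact hk v v.2
  let B' : (V ⧸ K) →ₗ[ℂ] Module.Dual ℂ (V ⧸ K) :=
    B.liftQ₂ K K le_rfl fun v hv => LinearMap.ext fun u => by
      rw [LinearMap.flip_apply, hs, LinearMap.mem_ker.1 hv]
  have hB' : ∀ u v : V, B' (K.mkQ u) (K.mkQ v) = B u v := fun u v => rfl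
  rw [LinearMap.det_eq_det_mul_det K T hK, hres, LinearMap.det_id, one_mul]
  refine det_mul_self_eq_one_of_preserves B' ?_ _ ?_
  · rw [injective_iff_map_eq_zero]
    intro q hq
    obtain ⟨u, rfl⟩ := K.mkQ_surjective q
    rw [Submodule.mkQ_apply, Submodule.Quotient.mk_eq_zero]
    refine LinearMap.mem_ker.2 (LinearMap.ext fun v => ?_)
    rw [← hB', hq]; rfl
  · intro p q
    obtain ⟨u, rfl⟩ := K.mkQ_surjective p
    obtain ⟨v, rfl⟩ := K.mkQ_surjective q
    exact (hB' (T u) (T v)).trans ((h u v).trans (hB' u v).symm)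

/-- Pointwise complex-analytic content of Theorem 3.1(a): if `Φ, Ψ` are local
biholomorphisms (here: twice differentiable with bijective derivative) with
`g ∘ Φ = g ∘ Ψ` near `x`, `x` a critical point of `f = g ∘ Φ`, `Φ x = Ψ x`, and
`dΦ = dΨ` on the kernel of the Hessian of `f` at `x`, then
`det (dΨ⁻¹ ∘ dΦ) = ±1`. -/
theorem stmt_0
    {E F : Type*} [NormedAddCommGroup E] [NormedSpace ℂ E] [FiniteDimensional ℂ E]
    [NormedAddCommGroup F] [NormedSpace ℂ F] [FiniteDimensional ℂ F]
    (Φ Ψ : E → F) (g : F → ℂ) (x : E)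
    (hΦ : ContDiffAt ℂ 2 Φ x) (hΨ : ContDiffAt ℂ 2 Ψ x)
    (hg : ContDiffAt ℂ 2 g (Φ x))
    (hpt : Φ x = Ψ x)
    (hagree : (g ∘ Φ) =ᶠ[nhds x] (g ∘ Ψ))
    (hcrit : fderiv ℂ (g ∘ Φ) x = 0)
    (hΦbij : Function.Bijective ⇑(fderiv ℂ Φ x))
    (hΨbij : Function.Bijective ⇑(fderiv ℂ Ψ x))
    (hker : ∀ v : E, (fderiv ℂ (fderiv ℂ (g ∘ Φ)) x) v = 0 →
      fderiv ℂ Φ x v = fderiv ℂ Ψ x v) :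
    LinearMap.det
      ((LinearEquiv.ofBijective (fderiv ℂ Ψ x).toLinearMap hΨbij).symm.toLinearMap ∘ₗ
        (fderiv ℂ Φ x).toLinearMap) = 1 ∨
    LinearMap.det
      ((LinearEquiv.ofBijective (fderiv ℂ Ψ x).toLinearMap hΨbij).symm.toLinearMap ∘ₗ
        (fderiv ℂ Φ x).toLinearMap) = -1 := by
  set D := fderiv ℂ Φ x with hD
  set D' := fderiv ℂ Ψ x with hD'
  have hg0 : fderiv ℂ g (Φ x) = 0 := by
    rw [fderiv_comp x (hg.differentiableAt (by norm_num)) (hΦ.differentiableAt (by norm_num))]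
      at hcrit
    ext w
    obtain ⟨v, rfl⟩ := hΦbij.2 w
    exact DFunLike.congr_fun hcrit v
  have H1 := hessian_comp_of_fderiv_eq_zero hΦ hg hg0
  have H2 := hessian_comp_of_fderiv_eq_zero hΨ (hpt ▸ hg) (hpt ▸ hg0)
  rw [← hagree.fderiv.fderiv_eq, ← hpt, ← hD'] at H2
  rw [← hD] at H1
  have hsymm : IsSymmSndFDerivAt ℂ (g ∘ Φ) x :=
    (hg.comp x hΦ).isSymmSndFDerivAt (by simp)
  set e := LinearEquiv.ofBijective D'.toLinearMap hΨbij
  have heD : ∀ w, D' (e.symm w) = w := fun w => e.apply_symm_apply w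
  let B : E →ₗ[ℂ] Module.Dual ℂ E :=
    (ContinuousLinearMap.coeLM ℂ) ∘ₗ (fderiv ℂ (fderiv ℂ (g ∘ Φ)) x).toLinearMap
  have hB : ∀ u v, B u v = fderiv ℂ (fderiv ℂ (g ∘ Φ)) x u v := fun u v => rfl
  refine mul_self_eq_one_iff.1 (det_mul_self_eq_one_of_fixes_ker B ?_ _ ?_ ?_)
  · exact fun u v => hsymm u v
  · intro u v
    rw [hB, hB, H2, H1]
    simp [heD]
  · intro v hv
    have : D v = D' v := hker v (ContinuousLinearMap.ext fun w => by
      rw [← hB, hv]; rfl)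
    apply e.injective
    exact (e.apply_symm_apply _).trans this
end

section
/- Let K be a field, n a natural number, g ∈ MvPolynomial (Fin n) K, and Φ, Ψ : Fin n → MvPolynomial (Fin n) K two polynomial self-maps of affine n-space such that substituting Φ into g and substituting Ψ into g give the same polynomial f := g∘Φ = g∘Ψ. Let a : Fin n → K be a point such that: (i) eval a (pderiv i f) = 0 for all i (a is a critical point of f); (ii) eval a (Φ j) = eval a (Ψ j) for all j; (iii) the Jacobian matrices JΦ := (eval a (pderiv j (Φ i)))_{i j} and JΨ := (eval a (pderiv j (Ψ i)))_{i j} have determinants that are units in K (i.e. nonzero); (iv) JΦ.mulVec v = JΨ.mulVec v for every vector v : Fin n → K with H.mulVec v = 0, where H := (eval a (pderiv i (pderiv j f)))_{i j} is the Hessian matrix of f at a. Then det JΦ = det JΨ or det JΦ = -det JΨ. -/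
open MvPolynomial

/-!
Let `G` be the Hessian of `g` at the common image point `b = Φ(a) = Ψ(a)`. Since `JΦ` is invertible
and `a` is critical for `f = g ∘ Φ`, the chain rule shows that `b` is critical for `g`, so the
second-order chain rule loses its gradient term and gives `JΦᵀ G JΦ = H = JΨᵀ G JΨ`. Hence
`M = JΨ⁻¹ JΦ` satisfies `Mᵀ H M = H`, and `M` is the identity on `ker H`. Morally, `M` induces an
isometry of the nondegenerate form on `Kⁿ / ker H`, so `det M = ± 1`.

The quotient can be avoided: as `M - 1` vanishes on `ker H`, it factors as `M = 1 + N H`. By the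
Weinstein–Aronszajn identity `Q = Mᵀ (1 + H N)` has determinant `(det M)²`. Moreover
`Q H = Mᵀ H M = H`, and, `H` being symmetric, `Q = 1 + H S` for some `S`. Thus `H S H = 0`, so `H S`
squares to zero and `det Q = 1`.
-/

lemma pderiv_bind₁_eq_sum {K : Type*} [CommRing K] {n : ℕ}
    (Φ : Fin n → MvPolynomial (Fin n) K) (g : MvPolynomial (Fin n) K) (i : Fin n) :
    pderiv i (bind₁ Φ g) = ∑ k, bind₁ Φ (pderiv k g) * pderiv i (Φ k) := by
  induction g using MvPolynomial.induction_on with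
  | C r => simp
  | add p q hp hq => simp [hp, hq, add_mul, Finset.sum_add_distrib]
  | mul_X p k hp =>
    simp only [map_mul, bind₁_X_right, Derivation.leibniz, hp, smul_eq_mul, map_add, add_mul,
      Finset.sum_add_distrib, pderiv_X, Finset.mul_sum]
    congr 1
    · rw [Finset.sum_eq_single k]
      · simp
      · intro l _ hl
        simp [hl.symm]
      · simp
    · exact Finset.sum_congr rfl fun _ _ => by ring

lemma pderiv_pderiv_comm {K : Type*} [CommRing K] {n : ℕ} (i j : Fin n)
    (p : MvPolynomial (Fin n) K) : pderiv i (pderiv j p) = pderiv j (pderiv i p) := by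
  have h : ⁅(pderiv i : Derivation K (MvPolynomial (Fin n) K) (MvPolynomial (Fin n) K)),
      pderiv (R := K) j⁆ = 0 := by
    refine derivation_ext fun k => ?_
    simp [Derivation.commutator_apply, pderiv_X, Pi.single_apply, apply_ite]
  have h2 := congrArg (fun D => D p) h
  simpa [Derivation.commutator_apply, sub_eq_zero] using h2

lemma eval_bind₁_eq_eval {K : Type*} [CommRing K] {n : ℕ}
    (Φ : Fin n → MvPolynomial (Fin n) K) (a : Fin n → K) (p : MvPolynomial (Fin n) K) :
    eval a (bind₁ Φ p) = eval (fun k => eval a (Φ k)) p := by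
  induction p using MvPolynomial.induction_on with
  | C r => simp
  | add p q hp hq => simp [hp, hq]
  | mul_X p k hp => simp [hp]

/-- At a critical point of `g ∘ Φ` where `Φ` is étale, the Hessian of `g ∘ Φ` is the pullback of the
Hessian of `g` under the Jacobian of `Φ`. -/
lemma hessian_bind₁_eq {K : Type*} [Field K] {n : ℕ}
    (g : MvPolynomial (Fin n) K) (Φ : Fin n → MvPolynomial (Fin n) K) (a : Fin n → K)
    (hcrit : ∀ i, eval a (pderiv i (bind₁ Φ g)) = 0)
    (J H : Matrix (Fin n) (Fin n) K)
    (hJ : ∀ i j, J i j = eval a (pderiv j (Φ i)))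
    (hH : ∀ i j, H i j = eval a (pderiv i (pderiv j (bind₁ Φ g))))
    (hu : IsUnit J.det) :
    H = J.transpose *
      Matrix.of (fun k l => eval (fun m => eval a (Φ m)) (pderiv k (pderiv l g))) * J := by
  have hg : ∀ k, eval (fun m => eval a (Φ m)) (pderiv k g) = 0 := by
    refine congrFun (Matrix.eq_zero_of_vecMul_eq_zero (M := J) hu.ne_zero ?_)
    funext i
    have h := hcrit i
    rw [pderiv_bind₁_eq_sum, map_sum] at h
    simp only [map_mul, eval_bind₁_eq_eval, ← hJ] at h
    exact h
  ext i j
  rw [hH, pderiv_bind₁_eq_sum, map_sum, map_sum, Matrix.mul_apply]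
  refine Finset.sum_congr rfl fun l _ => ?_
  rw [Derivation.leibniz, map_add, smul_eq_mul, smul_eq_mul, map_mul, map_mul,
    eval_bind₁_eq_eval, hg, zero_mul, zero_add, pderiv_bind₁_eq_sum, map_sum, ← hJ, mul_comm,
    Matrix.mul_apply]
  congr 1
  refine Finset.sum_congr rfl fun k _ => ?_
  rw [map_mul, eval_bind₁_eq_eval, ← hJ, Matrix.transpose_apply, Matrix.of_apply, mul_comm]

lemma det_one_add_of_mul_self_eq_zero {K : Type*} [Field K] {n : ℕ}
    (X : Matrix (Fin n) (Fin n) K) (hX : X * X = 0) : (1 + X).det = 1 := by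
  have hnil : IsNilpotent (-X) := ⟨2, by simp [pow_two, hX]⟩
  have h := (Matrix.isNilpotent_charpoly_sub_pow_of_isNilpotent hnil).eq_zero
  have h2 := congrArg (Polynomial.eval 1) h
  simpa [Matrix.eval_charpoly, sub_eq_zero] using h2

/-- A matrix vanishing on `ker H` has its rows in the row space of `H`. -/
lemma exists_eq_mul_of_ker_le {K : Type*} [Field K] {n : ℕ} (D H : Matrix (Fin n) (Fin n) K)
    (h : ∀ v : Fin n → K, H.mulVec v = 0 → D.mulVec v = 0) :
    ∃ N : Matrix (Fin n) (Fin n) K, D = N * H := by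
  have key : ∀ i, ∃ c : Fin n → K, ∑ j, c j • (LinearMap.proj j ∘ₗ H.mulVecLin) =
      LinearMap.proj i ∘ₗ D.mulVecLin := fun i => by
    refine (Submodule.mem_span_range_iff_exists_fun K).1 (mem_span_of_iInf_ker_le_ker ?_)
    intro v hv
    have h0 : H.mulVec v = 0 := by
      ext j
      simpa using (Submodule.mem_iInf _).1 hv j
    simp [h v h0]
  choose c hc using key
  refine ⟨Matrix.of c, ?_⟩
  ext i k
  have := congrArg (fun L => L (Pi.single k 1)) (hc i)
  simpa [Matrix.mul_apply, eq_comm] using this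

/-- An isometry of a possibly degenerate symmetric form which is the identity on the radical has
determinant `± 1`. -/
lemma det_sq_eq_one {K : Type*} [Field K] {n : ℕ} (M H : Matrix (Fin n) (Fin n) K)
    (hs : H.transpose = H) (hM : M.transpose * H * M = H)
    (hk : ∀ v : Fin n → K, H.mulVec v = 0 → M.mulVec v = v) : M.det * M.det = 1 := by
  obtain ⟨N, hN⟩ := exists_eq_mul_of_ker_le (M - 1) H fun v hv => by
    rw [Matrix.sub_mulVec, hk v hv, Matrix.one_mulVec, sub_self]
  have hM1 : M = 1 + N * H := by rw [← hN]; abel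
  have hMt : M.transpose = 1 + H * N.transpose := by
    rw [hM1, Matrix.transpose_add, Matrix.transpose_mul, hs, Matrix.transpose_one]
  have hQ : M.transpose * (1 + H * N) = 1 + H * (N.transpose + N + N.transpose * H * N) := by
    rw [hMt]; noncomm_ring
  have hQH : M.transpose * (1 + H * N) * H = H := by
    calc M.transpose * (1 + H * N) * H = M.transpose * H * (1 + N * H) := by noncomm_ring
      _ = H := by rw [← hM1, hM]
  have hdet : (M.transpose * (1 + H * N)).det = 1 := by
    rw [hQ]
    refine det_one_add_of_mul_self_eq_zero _ ?_
    rw [hQ, add_mul, one_mul, add_eq_left] at hQH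
    rw [← mul_assoc, hQH, zero_mul]
  rwa [Matrix.det_mul, Matrix.det_transpose, Matrix.det_one_add_mul_comm, ← hM1] at hdet

/-- Pointwise algebraic content of Theorem 3.1(a): if polynomial self-maps
`Φ, Ψ` of affine `n`-space satisfy `g ∘ Φ = f = g ∘ Ψ`, and `a` is a critical
point of `f` with `Φ(a) = Ψ(a)`, the Jacobians `JΦ, JΨ` of `Φ, Ψ` at `a` are
invertible, and `JΦ, JΨ` agree on the kernel of the Hessian of `f` at `a`,
then `det JΦ = ± det JΨ`. -/
theorem stmt_1 {K : Type*} [Field K] (n : ℕ)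
    (g : MvPolynomial (Fin n) K) (Φ Ψ : Fin n → MvPolynomial (Fin n) K)
    (f : MvPolynomial (Fin n) K)
    (hfΦ : bind₁ Φ g = f) (hfΨ : bind₁ Ψ g = f)
    (a : Fin n → K)
    (hcrit : ∀ i, eval a (pderiv i f) = 0)
    (hpt : ∀ j, eval a (Φ j) = eval a (Ψ j))
    (JΦ JΨ H : Matrix (Fin n) (Fin n) K)
    (hJΦ : ∀ i j, JΦ i j = eval a (pderiv j (Φ i)))
    (hJΨ : ∀ i j, JΨ i j = eval a (pderiv j (Ψ i)))
    (hH : ∀ i j, H i j = eval a (pderiv i (pderiv j f)))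
    (hJΦu : IsUnit JΦ.det) (hJΨu : IsUnit JΨ.det)
    (hker : ∀ v : Fin n → K, H.mulVec v = 0 → JΦ.mulVec v = JΨ.mulVec v) :
    JΦ.det = JΨ.det ∨ JΦ.det = -JΨ.det := by
  subst hfΦ
  have h1 := hessian_bind₁_eq g Φ a hcrit JΦ H hJΦ hH hJΦu
  have h2 := hessian_bind₁_eq g Ψ a (by rwa [hfΨ]) JΨ H hJΨ (by rwa [hfΨ]) hJΨu
  have hb : (fun m => eval a (Φ m)) = fun m => eval a (Ψ m) := funext hpt
  rw [hb] at h1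
  set G : Matrix (Fin n) (Fin n) K :=
    Matrix.of (fun k l => eval (fun m => eval a (Ψ m)) (pderiv k (pderiv l g)))
  have hs : H.transpose = H := by
    ext i j
    rw [Matrix.transpose_apply, hH, hH, pderiv_pderiv_comm]
  have hΦ : JΨ * (JΨ⁻¹ * JΦ) = JΦ := Matrix.mul_nonsing_inv_cancel_left _ _ hJΨu
  have hM : (JΨ⁻¹ * JΦ).transpose * H * (JΨ⁻¹ * JΦ) = H := by
    calc (JΨ⁻¹ * JΦ).transpose * H * (JΨ⁻¹ * JΦ)
        = (JΨ * (JΨ⁻¹ * JΦ)).transpose * G * (JΨ * (JΨ⁻¹ * JΦ)) := by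
          rw [h2, Matrix.transpose_mul JΨ]; simp only [mul_assoc]
      _ = H := by rw [hΦ, ← h1]
  have hd := det_sq_eq_one _ H hs hM fun v hv => by
    rw [← Matrix.mulVec_mulVec, hker v hv, Matrix.mulVec_mulVec, Matrix.nonsing_inv_mul _ hJΨu,
      Matrix.one_mulVec]
  have hdet : JΦ.det = JΨ.det * (JΨ⁻¹ * JΦ).det := by rw [← Matrix.det_mul, hΦ]
  rcases mul_self_eq_one_iff.1 hd with h | h <;> rw [h] at hdet <;> simp [hdet]
end

section
/- Let K be a field, V a finite-dimensional K-vector space, B a symmetric bilinear form on V, and T : V → V a K-linear map such that B (T u) (T v) = B u v for all u, v ∈ V, and T u = u for every u in the radical of B, i.e. every u with B u w = 0 for all w ∈ V. Then (det T)² = 1; in particular T is bijective and det T = 1 or det T = -1. -/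
/-!
`T` maps the radical `R = ker B` to itself (as the identity), so `det T` is the determinant of
`T` on `R`, which is `1`, times the determinant of the induced map `T'` on `V ⧸ R`. The form `B`
descends to a form `B'` on `V ⧸ R` with trivial kernel, and `T'` preserves `B'`. Taking
determinants of Gram matrices in `T'ᵀ B' T' = B'` and cancelling `det B' ≠ 0` gives
`(det T')² = 1`. Working with `V ⧸ R` rather than a complement of `R` avoids choosing one.
-/

lemma det_sq_eq_one_of_isometry {K W : Type*} [Field K] [AddCommGroup W] [Module K W]
    [FiniteDimensional K W] (B : LinearMap.BilinForm K W) (hB : B.SeparatingLeft)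
    (T : W →ₗ[K] W) (hT : ∀ u v, B (T u) (T v) = B u v) : LinearMap.det T ^ 2 = 1 := by
  classical
  let b := Module.finBasis K W
  have hdet := (LinearMap.separatingLeft_iff_det_ne_zero b).mp hB
  have hcomp : B.compl₁₂ T T = B := by
    ext u v
    exact hT u v
  have h := congrArg Matrix.det (LinearMap.toMatrix₂_compl₁₂ b b b b B T T)
  rw [hcomp, Matrix.det_mul, Matrix.det_mul, Matrix.det_transpose, LinearMap.det_toMatrix] at h
  -- `h` reads `det G = det T * det G * det T` for the Gram matrix `G` of `B`.
  apply mul_right_cancel₀ hdet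
  linear_combination -h

/-- Linear-algebra core of the proof of Theorem 3.1(a) (§3.2): if a linear
endomorphism `T` of a finite-dimensional vector space preserves a symmetric
bilinear form `B` and fixes the radical of `B` pointwise, then
`(det T)² = 1`; in particular `T` is bijective and `det T = ±1`. -/
theorem stmt_2 {K : Type*} [Field K] {V : Type*} [AddCommGroup V] [Module K V]
    [FiniteDimensional K V]
    (B : LinearMap.BilinForm K V)
    (hsymm : ∀ u v : V, B u v = B v u)
    (T : V →ₗ[K] V)
    (hiso : ∀ u v : V, B (T u) (T v) = B u v)
    (hrad : ∀ u : V, (∀ w : V, B u w = 0) → T u = u) :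
    (LinearMap.det T) ^ 2 = 1 ∧ Function.Bijective T ∧
      (LinearMap.det T = 1 ∨ LinearMap.det T = -1) := by
  have hflip : LinearMap.ker B ≤ LinearMap.ker B.flip := by
    intro u hu
    ext w
    simpa [hsymm w u] using LinearMap.congr_fun (LinearMap.mem_ker.mp hu) w
  have hfix : ∀ u ∈ LinearMap.ker B, T u = u := fun u hu =>
    hrad u fun w => LinearMap.congr_fun (LinearMap.mem_ker.mp hu) w
  have hinv : LinearMap.ker B ≤ (LinearMap.ker B).comap T := by
    intro u hu
    rwa [Submodule.mem_comap, hfix u hu]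
  have hrestrict : T.restrict hinv = LinearMap.id := by
    ext u
    exact hfix u u.2
  have hsep : (B.liftQ₂ _ _ le_rfl hflip).SeparatingLeft := by
    intro x hx
    induction x using Submodule.Quotient.induction_on with
    | H u =>
      rw [Submodule.Quotient.mk_eq_zero, LinearMap.mem_ker]
      ext w
      exact hx (Submodule.Quotient.mk w)
  have hquot := det_sq_eq_one_of_isometry _ hsep ((LinearMap.ker B).mapQ _ T hinv) (by
    intro x y
    induction x using Submodule.Quotient.induction_on with
    | H u =>
      induction y using Submodule.Quotient.induction_on with
      | H v => exact hiso u v)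
  have hsq : LinearMap.det T ^ 2 = 1 := by
    rw [LinearMap.det_eq_det_mul_det (LinearMap.ker B) T hinv, hrestrict, LinearMap.det_id,
      one_mul, hquot]
  have hunit : IsUnit (LinearMap.det T) := IsUnit.of_pow_eq_one hsq two_ne_zero
  exact ⟨hsq, (Module.End.isUnit_iff T).mp ((LinearMap.isUnit_iff_isUnit_det T).mpr hunit),
    sq_eq_one_iff.mp hsq⟩
end

section
/- Let E, F, G be normed vector spaces over ℂ, Φ : E → F and g : F → G maps, and x ∈ E. Assume ContDiffAt ℂ 2 Φ x and ContDiffAt ℂ 2 g (Φ x), and assume Φ(x) is a critical point of g, i.e. fderiv ℂ g (Φ x) = 0. Then for all u, v ∈ E, (fderiv ℂ (fderiv ℂ (g ∘ Φ)) x) u v = (fderiv ℂ (fderiv ℂ g) (Φ x)) ((fderiv ℂ Φ x) u) ((fderiv ℂ Φ x) v); that is, the Hessian of g ∘ Φ at x is the pullback of the Hessian of g at Φ(x) along fderiv ℂ Φ x. -/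
/-!
Near `x` the chain rule gives `D(g ∘ Φ) = (Dg ∘ Φ) ∘ DΦ`. Differentiating this product of operator-valued
maps at `x` gives `D²g(Φ x)(DΦ u, DΦ v) + Dg(Φ x)(D²Φ(u, v))`, and the second summand vanishes because
`Dg(Φ x) = 0`.
-/

/-- Second-order chain rule at a critical point (used in §3.2 of the paper):
if `Φ` and `g` are twice continuously differentiable and `Φ x` is a critical
point of `g`, then the Hessian of `g ∘ Φ` at `x` is the pullback of the
Hessian of `g` at `Φ x` along `fderiv ℂ Φ x`. -/
theorem stmt_3 {E F G : Type*}
    [NormedAddCommGroup E] [NormedSpace ℂ E]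
    [NormedAddCommGroup F] [NormedSpace ℂ F]
    [NormedAddCommGroup G] [NormedSpace ℂ G]
    (Φ : E → F) (g : F → G) (x : E)
    (hΦ : ContDiffAt ℂ 2 Φ x) (hg : ContDiffAt ℂ 2 g (Φ x))
    (hcrit : fderiv ℂ g (Φ x) = 0) :
    ∀ u v : E,
      (fderiv ℂ (fderiv ℂ (g ∘ Φ)) x) u v =
        (fderiv ℂ (fderiv ℂ g) (Φ x)) ((fderiv ℂ Φ x) u) ((fderiv ℂ Φ x) v) := by
  intro u v
  have hΦ' : DifferentiableAt ℂ (fderiv ℂ Φ) x :=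
    (hΦ.fderiv_right (m := 1) (by norm_num)).differentiableAt (by norm_num)
  have hg' : DifferentiableAt ℂ (fderiv ℂ g) (Φ x) :=
    (hg.fderiv_right (m := 1) (by norm_num)).differentiableAt (by norm_num)
  -- The second derivative depends only on the germ of the first, so the chain rule is
  -- needed on a whole neighbourhood of `x`.
  have hchain : fderiv ℂ (g ∘ Φ) =ᶠ[nhds x]
      fun y => (fderiv ℂ g (Φ y)).comp (fderiv ℂ Φ y) := by
    filter_upwards [hΦ.eventually (by norm_num),
      hΦ.continuousAt.eventually (hg.eventually (by norm_num))] with y hy hgy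
    exact fderiv_comp y (hgy.differentiableAt (by norm_num)) (hy.differentiableAt (by norm_num))
  have houter : HasFDerivAt (fun y => fderiv ℂ g (Φ y))
      ((fderiv ℂ (fderiv ℂ g) (Φ x)).comp (fderiv ℂ Φ x)) x :=
    hg'.hasFDerivAt.comp x (hΦ.differentiableAt (by norm_num)).hasFDerivAt
  rw [hchain.fderiv_eq, (houter.clm_comp hΦ'.hasFDerivAt).fderiv]
  -- Of the two product-rule terms, the one containing the Hessian of `Φ` is killed by `hcrit`.
  simp [hcrit]
end

section
/- Let R be a commutative ring, n a natural number, t ∈ R, c, u, v : Fin n → R, and D, E : Fin n → Fin n → R with D i j = D j i and E i j = E j i for all i, j. Suppose ∑_i c i · u i + ∑_{i,j} D i j · u i · u j = ∑_i c i · v i + ∑_{i,j} E i j · v i · v j, and set w i := (1 - t) · u i + t · v i. Then both sides of the hypothesis equal ∑_i (c i + 2·t·(1 - t)·∑_j (D i j - E i j)·(u j - v j)) · w i + ∑_{i,j} ((1 - t)·D i j + t·E i j) · w i · w j + t·(1 - t)·∑_{i,j} (t·D i j + (1 - t)·E i j)·(u i - v i)·(u j - v j). -/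
/-!
With `d = u - v` one has `u = w + t d` and `v = w - (1 - t) d`. Expanding the quadratic forms of `D`
at `u` and of `E` at `v` by symmetry shows that the interpolated expression is exactly
`(1 - t) F + t G`, where `F` and `G` are the two given second-order expressions
(`interpolation_eq`). This holds without assuming `F = G`; when `F = G`, the
combination is their common value.
-/

/-- Symmetrization of the cross term: both mixed products `B(w, d)` and `B(d, w)` of a symmetric
form `B` agree, so `2 B(w, d)` can be written symmetrically in the two indices. -/
theorem two_mul_cross_term {R : Type*} [CommRing R] {n : ℕ} (s : R) (w d : Fin n → R)
    (B : Fin n → Fin n → R) (hB : ∀ i j, B i j = B j i) :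
    ∑ i, (2 * s * ∑ j, B i j * d j) * w i
      = ∑ i, ∑ j, s * B i j * (w i * d j + w j * d i) := by
  have hswap : ∑ i, ∑ j, s * B i j * (w j * d i) = ∑ i, ∑ j, s * B i j * (w i * d j) := by
    rw [Finset.sum_comm]
    refine Finset.sum_congr rfl fun i _ => Finset.sum_congr rfl fun j _ => ?_
    rw [hB j i]
  simp only [mul_add, Finset.sum_add_distrib]
  rw [hswap, ← two_mul, Finset.mul_sum]
  refine Finset.sum_congr rfl fun i _ => ?_
  rw [Finset.mul_sum, Finset.mul_sum, Finset.sum_mul]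
  exact Finset.sum_congr rfl fun j _ => by ring

/-- The interpolated expression is the affine combination, with weights `1 - t` and `t`, of the
second-order expressions at `u` and at `v`. -/
theorem interpolation_eq {R : Type*} [CommRing R] (n : ℕ) (t : R)
    (c u v : Fin n → R) (D E : Fin n → Fin n → R)
    (hD : ∀ i j, D i j = D j i) (hE : ∀ i j, E i j = E j i)
    (w : Fin n → R) (hw : ∀ i, w i = (1 - t) * u i + t * v i) :
    ∑ i, (c i + 2 * t * (1 - t) * ∑ j, (D i j - E i j) * (u j - v j)) * w i
          + ∑ i, ∑ j, ((1 - t) * D i j + t * E i j) * w i * w j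
          + t * (1 - t) * ∑ i, ∑ j, (t * D i j + (1 - t) * E i j)
              * (u i - v i) * (u j - v j)
      = (1 - t) * (∑ i, c i * u i + ∑ i, ∑ j, D i j * u i * u j)
        + t * (∑ i, c i * v i + ∑ i, ∑ j, E i j * v i * v j) := by
  have hcross := two_mul_cross_term (t * (1 - t)) w (fun i => u i - v i)
    (fun i j => D i j - E i j) (fun i j => by rw [hD, hE])
  have hlin : ∑ i, c i * w i = (1 - t) * ∑ i, c i * u i + t * ∑ i, c i * v i := by
    rw [Finset.mul_sum, Finset.mul_sum, ← Finset.sum_add_distrib]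
    exact Finset.sum_congr rfl fun i _ => by rw [hw]; ring
  have hquad : ∑ i, ∑ j, t * (1 - t) * (D i j - E i j)
          * (w i * (u j - v j) + w j * (u i - v i))
        + ∑ i, ∑ j, ((1 - t) * D i j + t * E i j) * w i * w j
        + t * (1 - t) * ∑ i, ∑ j, (t * D i j + (1 - t) * E i j) * (u i - v i) * (u j - v j)
      = (1 - t) * ∑ i, ∑ j, D i j * u i * u j + t * ∑ i, ∑ j, E i j * v i * v j := by
    simp only [Finset.mul_sum, ← Finset.sum_add_distrib]
    refine Finset.sum_congr rfl fun i _ => Finset.sum_congr rfl fun j _ => ?_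
    rw [hw i, hw j]
    ring
  simp only [add_mul, Finset.sum_add_distrib, mul_assoc] at hcross hlin hquad ⊢
  linear_combination hcross + hlin + hquad


/-- The algebraic interpolation identity (3.16) at the heart of the proof of
Proposition 3.4 of the paper. -/
theorem stmt_6 {R : Type*} [CommRing R] (n : ℕ) (t : R)
    (c u v : Fin n → R) (D E : Fin n → Fin n → R)
    (hD : ∀ i j, D i j = D j i) (hE : ∀ i j, E i j = E j i)
    (h : ∑ i, c i * u i + ∑ i, ∑ j, D i j * u i * u j
        = ∑ i, c i * v i + ∑ i, ∑ j, E i j * v i * v j)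
    (w : Fin n → R) (hw : ∀ i, w i = (1 - t) * u i + t * v i) :
    (∑ i, c i * u i + ∑ i, ∑ j, D i j * u i * u j
        = ∑ i, (c i + 2 * t * (1 - t) * ∑ j, (D i j - E i j) * (u j - v j)) * w i
          + ∑ i, ∑ j, ((1 - t) * D i j + t * E i j) * w i * w j
          + t * (1 - t) * ∑ i, ∑ j, (t * D i j + (1 - t) * E i j)
              * (u i - v i) * (u j - v j)) ∧
    (∑ i, c i * v i + ∑ i, ∑ j, E i j * v i * v j
        = ∑ i, (c i + 2 * t * (1 - t) * ∑ j, (D i j - E i j) * (u j - v j)) * w i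
          + ∑ i, ∑ j, ((1 - t) * D i j + t * E i j) * w i * w j
          + t * (1 - t) * ∑ i, ∑ j, (t * D i j + (1 - t) * E i j)
              * (u i - v i) * (u j - v j)) := by
  have key := interpolation_eq n t c u v D E hD hE w hw
  exact ⟨by rw [key, ← h]; ring, by rw [key, h]; ring⟩
end

section
/- Let R be a commutative ring, n a natural number, A, x, y : Fin n → R, and z, C, D : Fin n → Fin n → R. Suppose that x i - y i = ∑_j z i j · A j for all i, and that z i j + ∑_{l,m} C l m · z l i · z m j + D i j = 0 for all i, j. Then ∑_i A i · (x i - y i) + ∑_{i,j} C i j · (x i - y i) · (x j - y j) + ∑_{i,j} D i j · A i · A j = 0. -/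
/-!
Substituting `x i - y i = ∑ j, z i j * A j` turns all three sums into quadratic forms in `A`.
After exchanging the order of summation, the coefficient of `A i * A j` in their total is
`z i j + ∑ l, ∑ m, C l m * z l i * z m j + D i j`, which vanishes by hypothesis.
-/

/-- The ring identity proving Proposition 4.2(a) of the paper: on the scheme
`T`, the expansion of `f ∘ π_{U'} - g ∘ π_{V'}` vanishes identically. -/
theorem stmt_8 {R : Type*} [CommRing R] (n : ℕ)
    (A x y : Fin n → R) (z C D : Fin n → Fin n → R)
    (h1 : ∀ i, x i - y i = ∑ j, z i j * A j)
    (h2 : ∀ i j, z i j + ∑ l, ∑ m, C l m * z l i * z m j + D i j = 0) :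
    ∑ i, A i * (x i - y i)
      + ∑ i, ∑ j, C i j * (x i - y i) * (x j - y j)
      + ∑ i, ∑ j, D i j * A i * A j = 0 := by
  -- The quadratic term in `x - y`, written as a quadratic form in `A`.
  have hC : ∑ l, ∑ m, C l m * (x l - y l) * (x m - y m)
      = ∑ i, ∑ j, (∑ l, ∑ m, C l m * z l i * z m j) * (A i * A j) := by
    have e : ∀ l m, C l m * (x l - y l) * (x m - y m)
        = ∑ p : Fin n × Fin n, C l m * z l p.1 * z m p.2 * (A p.1 * A p.2) := by
      intro l m
      rw [h1, h1, mul_assoc, Finset.sum_mul_sum, Fintype.sum_prod_type]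
      simp only [Finset.mul_sum]
      exact Finset.sum_congr rfl fun i _ => Finset.sum_congr rfl fun j _ => by ring
    simp only [e, Finset.sum_mul]
    rw [← Fintype.sum_prod_type', Finset.sum_comm, Fintype.sum_prod_type]
    simp only [Fintype.sum_prod_type]
  have hA : ∑ i, A i * (x i - y i) = ∑ i, ∑ j, z i j * (A i * A j) := by
    simp only [h1, Finset.mul_sum]
    exact Finset.sum_congr rfl fun i _ => Finset.sum_congr rfl fun j _ => by ring
  rw [hC, hA]
  simp only [← Finset.sum_add_distrib]
  -- The coefficient of `A i * A j` is the left-hand side of `h2 i j`.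
  refine Finset.sum_eq_zero fun i _ => Finset.sum_eq_zero fun j _ => ?_
  linear_combination (A i * A j) * h2 i j
end
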